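/- Let μ be a finite Borel measure on [0,∞), let α : ℝ → ℝ be continuous with compact support with Fourier transform α̂(ω) = ∫_ℝ α(t) e^{-iωt} dt satisfying α̂(0) ≠ 0, and let δ > 0. If lim_{R→∞} ∫_{[0,∞)} α̂(δR√s) dμ(s) = α̂(0) · μ([0,∞)), then μ((0,∞)) = 0, i.e. μ is the point mass μ({0}) · δ₀ concentrated at s = 0. -/

import Mathlib

open MeasureTheory Filter
open scoped Topology

/-- One-dimensional Fourier transform `f̂(ω) = ∫_ℝ f(t) e^{-iωt} dt` of a real function. -/
noncomputable def fourier1d (f : ℝ → ℝ) (ω : ℝ) : ℂ :=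
  ∫ t : ℝ, (f t : ℂ) * Complex.exp (-(Complex.I * ω * t))

theorem aux_norm_exp (ω t : ℝ) : ‖Complex.exp (-(Complex.I * ω * t))‖ = 1 := by
  have : -(Complex.I * ω * t) = ((-(ω * t) : ℝ) : ℂ) * Complex.I := by push_cast; ring
  rw [this, Complex.norm_exp_ofReal_mul_I]

theorem aux_bound (f : ℝ → ℝ) (ω : ℝ) : ‖fourier1d f ω‖ ≤ ∫ t, ‖f t‖ := by
  unfold fourier1d
  refine (norm_integral_le_integral_norm _).trans (le_of_eq ?_)
  congr 1 with t
  rw [norm_mul, aux_norm_exp, mul_one, Complex.norm_real]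

theorem aux_cont (f : ℝ → ℝ) (hc : Continuous f) (hs : HasCompactSupport f) :
    Continuous (fourier1d f) := by
  unfold fourier1d
  refine continuous_of_dominated (bound := fun t => ‖f t‖) ?_ ?_ ?_ ?_
  · intro ω
    exact Continuous.aestronglyMeasurable (by fun_prop)
  · intro ω
    refine Eventually.of_forall fun t => ?_
    rw [norm_mul, aux_norm_exp, mul_one, Complex.norm_real]
  · exact (hc.integrable_of_hasCompactSupport hs).norm
  · refine Eventually.of_forall fun t => ?_
    fun_prop

theorem aux_RL (f : ℝ → ℝ) : Tendsto (fourier1d f) atTop (𝓝 0) := by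
  have h := Real.tendsto_integral_exp_smul_cocompact (fun t => (f t : ℂ))
  have h2 : Tendsto (fun ω : ℝ => ω / (2 * Real.pi)) atTop (cocompact ℝ) :=
    (tendsto_id.atTop_div_const (by positivity)).mono_right atTop_le_cocompact
  refine (h.comp h2).congr fun ω => ?_
  unfold fourier1d
  simp only [Function.comp]
  congr 1 with t
  rw [Circle.smul_def, Real.fourierChar_apply, smul_eq_mul, mul_comm]
  congr 2
  have : (Real.pi : ℂ) ≠ 0 := by exact_mod_cast Real.pi_ne_zero
  push_cast
  field_simp

/-- If for a finite Borel measure `μ` supported on `[0,∞)`, a continuous compactly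
supported `α` with `α̂(0) ≠ 0`, and some `δ > 0`, the full mass of the spectral measure
survives the smearing limit, i.e. `lim_{R→∞} ∫ α̂(δR√s) dμ(s) = α̂(0) · μ([0,∞))`,
then `μ((0,∞)) = 0`, i.e. `μ` is the point mass `μ({0}) · δ₀` concentrated at `s = 0`. -/
theorem spectral_measure_eq_dirac_of_smearing_limit
    (μ : Measure ℝ) [IsFiniteMeasure μ] (hμ : μ (Set.Iio 0) = 0)
    (α : ℝ → ℝ) (hαc : Continuous α) (hαs : HasCompactSupport α)
    (hα0 : fourier1d α 0 ≠ 0)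
    (δ : ℝ) (hδ : 0 < δ)
    (hlim : Tendsto (fun R : ℝ => ∫ s, fourier1d α (δ * R * Real.sqrt s) ∂μ)
      atTop (𝓝 ((μ (Set.Ici 0)).toReal • fourier1d α 0))) :
    μ (Set.Ioi 0) = 0 ∧ μ = μ {0} • Measure.dirac (0 : ℝ) := by
  have hL : Tendsto (fun R : ℝ => ∫ s, fourier1d α (δ * R * Real.sqrt s) ∂μ)
      atTop (𝓝 (∫ s, (Set.Iic (0:ℝ)).indicator (fun _ => fourier1d α 0) s ∂μ)) := by
    refine tendsto_integral_filter_of_dominated_convergence (fun _ => ∫ t, ‖α t‖) ?_ ?_ ?_ ?_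
    · refine Eventually.of_forall fun R => ?_
      have := aux_cont α hαc hαs
      exact Continuous.aestronglyMeasurable (by fun_prop)
    · exact Eventually.of_forall fun R => Eventually.of_forall fun s => aux_bound _ _
    · exact integrable_const _
    · refine Eventually.of_forall fun s => ?_
      by_cases hs : s ≤ 0
      · simp [Set.indicator, hs, Real.sqrt_eq_zero_of_nonpos hs]
      · have h0 : 0 < Real.sqrt s := Real.sqrt_pos.2 (not_le.1 hs)
        simp only [Set.indicator, Set.mem_Iic, hs, if_false]
        exact (aux_RL α).comp
          ((tendsto_id.const_mul_atTop hδ).atTop_mul_const h0)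
  have he := tendsto_nhds_unique hlim hL
  rw [integral_indicator_const _ measurableSet_Iic] at he
  have he2 : (μ (Set.Ici 0)).toReal = μ.real (Set.Iic 0) := smul_left_injective ℝ hα0 he
  rw [Measure.real, ENNReal.toReal_eq_toReal_iff' (measure_ne_top _ _) (measure_ne_top _ _)] at he2
  have h1 : μ (Set.Iic 0) = μ {0} := by
    rw [← Set.Iio_union_right, measure_union (by simp) (measurableSet_singleton _), hμ, zero_add]
  have h2 : μ (Set.Ici 0) = μ {0} + μ (Set.Ioi 0) := by
    rw [← Set.Ioi_union_left, measure_union (by simp) (measurableSet_singleton _), add_comm]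
  rw [h1, h2] at he2
  have h3 : μ (Set.Ioi 0) = 0 := by
    have : μ {0} + μ (Set.Ioi 0) = μ {0} + 0 := by rw [he2, add_zero]
    exact (ENNReal.add_right_inj (measure_ne_top _ _)).1 this
  refine ⟨h3, ?_⟩
  have h4 : μ ({0}ᶜ : Set ℝ) = 0 := by
    rw [← Set.Iio_union_Ioi]
    exact measure_union_null hμ h3
  rw [← Measure.restrict_singleton, Measure.restrict_eq_self_of_ae_mem]
  exact h4
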